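/- arXiv:1908.02903 — 3 statements merged into one kernel-verified Lean document; each statement's English description precedes it below -/
import Mathlib

section
/- Let μ be a compactly supported positive measure on ℝⁿ, n ≥ 3, with |μ|(B(x,r)) ≤ C_μ r^α for some α > n-2. Then the homogeneous Sobolev space Ḣ¹(ℝⁿ) embeds continuously into L²(μ): there is a constant C with ∫ |φ|² dμ ≤ C ‖φ‖²_{Ḣ¹} for all φ ∈ Ḣ¹(ℝⁿ). -/
open MeasureTheory Metric

open scoped ENNReal

/-- Weight. -/
noncomputable def wgt (p q t : ℝ) : ℝ := if t ≤ 1 then t ^ p else t ^ q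

lemma wgt_meas (p q : ℝ) : Measurable (wgt p q) := by
  unfold wgt
  exact Measurable.ite measurableSet_Iic (by fun_prop) (by fun_prop)

lemma wgt_pos (p q : ℝ) {t : ℝ} (ht : 0 < t) : 0 < wgt p q t := by
  unfold wgt
  split_ifs <;> positivity

lemma wgt_int {p q : ℝ} (hp : -1 < p) (hq : q < -1) :
    ∫⁻ t in Set.Ioi (0 : ℝ), ENNReal.ofReal (wgt p q t) < ⊤ := by
  apply IntegrableOn.setLIntegral_lt_top
  rw [← Set.Ioc_union_Ioi_eq_Ioi (zero_le_one' ℝ)]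
  apply IntegrableOn.union
  · have h := (intervalIntegral.intervalIntegrable_rpow' hp (a := 0) (b := 1)).1
    refine h.congr_fun (fun t ht => ?_) measurableSet_Ioc
    simp [wgt, ht.2]
  · have h := integrableOn_Ioi_rpow_of_lt hq zero_lt_one
    refine h.congr_fun (fun t ht => ?_) measurableSet_Ioi
    simp [wgt, not_le.2 (Set.mem_Ioi.1 ht)]

lemma step1 {E : Type*} [NormedAddCommGroup E] [NormedSpace ℝ E]
    {φ : E → ℝ} (hφ : ContDiff ℝ (⊤ : ℕ∞) φ) (hc : HasCompactSupport φ)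
    (x z : E) (hz : z ≠ 0) (hz1 : ‖z‖ ≤ 1) :
    ‖φ x‖ₑ ≤ ∫⁻ t in Set.Ioi (0 : ℝ), ‖fderiv ℝ φ (x + t • z)‖ₑ := by
  obtain ⟨R, hR⟩ := hc.isCompact.isBounded.subset_closedBall 0
  have hzp : 0 < ‖z‖ := norm_pos_iff.2 hz
  set T : ℝ := (|R| + ‖x‖ + 1) / ‖z‖ with hT
  have hT0 : 0 ≤ T := by positivity
  have hφT : φ (x + T • z) = 0 := by
    by_contra h
    have h1 := hR (subset_tsupport φ h)
    rw [mem_closedBall_zero_iff] at h1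
    have h2 : ‖T • z‖ = |R| + ‖x‖ + 1 := by
      rw [norm_smul, Real.norm_of_nonneg hT0, hT]
      field_simp
    have h3 : ‖T • z‖ ≤ ‖x + T • z‖ + ‖x‖ := by
      have := norm_sub_le (x + T • z) x
      simpa using this
    have := le_abs_self R
    linarith
  have hd : ∀ t : ℝ, HasDerivAt (fun t : ℝ => φ (x + t • z)) (fderiv ℝ φ (x + t • z) z) t := by
    intro t
    have h1 : HasDerivAt (fun t : ℝ => x + t • z) z t := by
      simpa using ((hasDerivAt_id t).smul_const z).const_add x
    exact ((hφ.differentiable (by simp)) (x + t • z)).hasFDerivAt.comp_hasDerivAt t h1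
  have hcf : Continuous (fderiv ℝ φ) := hφ.continuous_fderiv (by simp)
  have hi := intervalIntegral.integral_eq_sub_of_hasDerivAt (a := 0) (b := T)
    (fun t _ => hd t) (Continuous.intervalIntegrable (by fun_prop) _ _)
  rw [hφT, intervalIntegral.integral_of_le hT0] at hi
  have : ‖φ x‖ₑ = ‖∫ t in Set.Ioc 0 T, fderiv ℝ φ (x + t • z) z‖ₑ := by
    rw [hi]; simp
  rw [this]
  refine (enorm_integral_le_lintegral_enorm _).trans ?_
  refine le_trans ?_ (lintegral_mono_set (Set.Ioc_subset_Ioi_self (a := T) (b := 0)))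
  refine lintegral_mono fun t => ?_
  rw [← ofReal_norm_eq_enorm, ← ofReal_norm_eq_enorm]
  apply ENNReal.ofReal_le_ofReal
  calc _ ≤ _ := ContinuousLinearMap.le_opNorm _ _
    _ ≤ ‖fderiv ℝ φ (x + t • z)‖ * 1 := by gcongr
    _ = _ := mul_one _

lemma cs {X : Type*} [MeasurableSpace X] (μ : Measure X) {f g : X → ℝ≥0∞}
    (hf : Measurable f) (hg : Measurable g) :
    (∫⁻ a, f a * g a ∂μ) ^ 2 ≤ (∫⁻ a, f a ^ 2 ∂μ) * ∫⁻ a, g a ^ 2 ∂μ := by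
  have h := ENNReal.lintegral_mul_le_Lp_mul_Lq μ
    (Real.HolderConjugate.two_two) hf.aemeasurable hg.aemeasurable
  simp only [Pi.mul_apply, ENNReal.rpow_two] at h
  calc _ ≤ _ := pow_le_pow_left' h 2
    _ = _ := by
      rw [mul_pow, ← ENNReal.rpow_natCast, ← ENNReal.rpow_natCast, ← ENNReal.rpow_mul,
        ← ENNReal.rpow_mul]
      norm_num

lemma step2 {G : ℝ → ℝ≥0∞} (hG : Measurable G) (p q : ℝ) :
    (∫⁻ t in Set.Ioi (0 : ℝ), G t) ^ 2 ≤
      (∫⁻ t in Set.Ioi (0 : ℝ), ENNReal.ofReal (wgt p q t)) *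
      ∫⁻ t in Set.Ioi (0 : ℝ), ENNReal.ofReal ((wgt p q t)⁻¹) * G t ^ 2 := by
  have hm := wgt_meas p q
  have h := cs (volume.restrict (Set.Ioi (0 : ℝ)))
    (f := fun t => ENNReal.ofReal (√(wgt p q t)))
    (g := fun t => ENNReal.ofReal ((√(wgt p q t))⁻¹) * G t) (by fun_prop) (by fun_prop)
  refine le_trans (le_of_eq ?_) (h.trans (le_of_eq ?_))
  · congr 1
    refine setLIntegral_congr_fun measurableSet_Ioi fun t ht => ?_
    have := wgt_pos p q ht
    beta_reduce
    rw [← mul_assoc, ← ENNReal.ofReal_mul (by positivity), mul_inv_cancel₀ (by positivity)]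
    simp
  · congr 1
    · refine setLIntegral_congr_fun measurableSet_Ioi fun t ht => ?_
      have := wgt_pos p q ht
      rw [← ENNReal.ofReal_pow (by positivity), Real.sq_sqrt this.le]
    · refine setLIntegral_congr_fun measurableSet_Ioi fun t ht => ?_
      have := wgt_pos p q ht
      beta_reduce
      rw [mul_pow, ← ENNReal.ofReal_pow (by positivity), inv_pow, Real.sq_sqrt this.le]

lemma step4 {n : ℕ} {F : EuclideanSpace ℝ (Fin n) → ℝ≥0∞} (hF : Measurable F)
    (x : EuclideanSpace ℝ (Fin n)) {t : ℝ} (ht : 0 < t) :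
    ∫⁻ z in ball (0 : EuclideanSpace ℝ (Fin n)) 1, F (x + t • z) =
      ENNReal.ofReal ((t ^ n)⁻¹) * ∫⁻ y, (ball y t).indicator 1 x * F y := by
  have e1 : ∫⁻ z in ball (0 : EuclideanSpace ℝ (Fin n)) 1, F (x + t • z) =
      ∫⁻ z, (ball x t).indicator F (x + t • z) := by
    rw [← lintegral_indicator measurableSet_ball]
    refine lintegral_congr fun z => ?_
    have : (x + t • z ∈ ball x t) ↔ z ∈ ball (0 : EuclideanSpace ℝ (Fin n)) 1 := by
      rw [mem_ball_iff_norm, mem_ball_zero_iff, add_sub_cancel_left, norm_smul,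
        Real.norm_of_nonneg ht.le]
      exact mul_lt_iff_lt_one_right ht
    by_cases h : z ∈ ball (0 : EuclideanSpace ℝ (Fin n)) 1
    · rw [Set.indicator_of_mem h, Set.indicator_of_mem (this.2 h)]
    · rw [Set.indicator_of_notMem h, Set.indicator_of_notMem (fun h' => h (this.1 h'))]
  have hm : Measurable ((ball x t).indicator F) := hF.indicator measurableSet_ball
  rw [e1]
  have e2 := lintegral_map (μ := (volume : Measure (EuclideanSpace ℝ (Fin n))))
    (f := fun y => (ball x t).indicator F (x + y)) (g := fun z => t • z) (by fun_prop) (by fun_prop)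
  rw [← e2, Measure.map_addHaar_smul _ ht.ne', lintegral_smul_measure,
    lintegral_add_left_eq_self]
  have : |(t ^ n)⁻¹| = (t ^ n)⁻¹ := abs_of_pos (by positivity)
  simp only [finrank_euclideanSpace, Fintype.card_fin, this, smul_eq_mul]
  congr 1
  refine lintegral_congr fun y => ?_
  by_cases h : y ∈ ball x t
  · rw [Set.indicator_of_mem h, Set.indicator_of_mem (mem_ball_comm.1 h)]; simp
  · rw [Set.indicator_of_notMem h, Set.indicator_of_notMem (fun h' => h (mem_ball_comm.1 h'))]; simp

lemma step5 {n : ℕ} {F : EuclideanSpace ℝ (Fin n) → ℝ≥0∞} (hF : Measurable F)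
    (μ : Measure (EuclideanSpace ℝ (Fin n))) [IsFiniteMeasure μ]
    {t : ℝ} (ht : 0 < t) (m : ℝ≥0∞) (hm : ∀ y, μ (ball y t) ≤ m) :
    ∫⁻ x, (∫⁻ z in ball (0 : EuclideanSpace ℝ (Fin n)) 1, F (x + t • z)) ∂μ ≤
      ENNReal.ofReal ((t ^ n)⁻¹) * m * ∫⁻ y, F y := by
  simp_rw [step4 hF _ ht]
  have hms : Measurable (Function.uncurry fun x y : EuclideanSpace ℝ (Fin n) =>
      (ball y t).indicator (1 : EuclideanSpace ℝ (Fin n) → ℝ≥0∞) x * F y) := by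
    have hs : MeasurableSet {p : EuclideanSpace ℝ (Fin n) × EuclideanSpace ℝ (Fin n) |
        dist p.1 p.2 < t} := measurableSet_lt (by fun_prop) (by fun_prop)
    have : (Function.uncurry fun x y : EuclideanSpace ℝ (Fin n) =>
      (ball y t).indicator (1 : EuclideanSpace ℝ (Fin n) → ℝ≥0∞) x * F y) =
      fun p => ({p : EuclideanSpace ℝ (Fin n) × EuclideanSpace ℝ (Fin n) |
        dist p.1 p.2 < t}).indicator 1 p * F p.2 := by
      ext p
      simp [Function.uncurry, Set.indicator]
    rw [this]
    exact (measurable_one.indicator hs).mul (hF.comp measurable_snd)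
  rw [lintegral_const_mul' _ _ ENNReal.ofReal_ne_top, mul_assoc,
    lintegral_lintegral_swap hms.aemeasurable, ← lintegral_const_mul _ hF]
  gcongr with y
  rw [lintegral_mul_const _ (measurable_one.indicator measurableSet_ball),
    lintegral_indicator_one measurableSet_ball]
  gcongr
  exact hm y

lemma step6 {n : ℕ} (hn : 3 ≤ n) (μ : Measure (EuclideanSpace ℝ (Fin n))) [IsFiniteMeasure μ]
    (p q : ℝ) (m : ℝ → ℝ≥0∞) (hm : ∀ t, 0 < t → ∀ y, μ (ball y t) ≤ m t)
    {φ : EuclideanSpace ℝ (Fin n) → ℝ} (hφ : ContDiff ℝ (⊤ : ℕ∞) φ) (hc : HasCompactSupport φ) :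
    volume (ball (0 : EuclideanSpace ℝ (Fin n)) 1) * ∫⁻ x, ‖φ x‖ₑ ^ 2 ∂μ ≤
      (∫⁻ t in Set.Ioi (0 : ℝ), ENNReal.ofReal (wgt p q t)) *
      ((∫⁻ t in Set.Ioi (0 : ℝ), ENNReal.ofReal ((wgt p q t)⁻¹) *
        (ENNReal.ofReal ((t ^ n)⁻¹) * m t)) * ∫⁻ y, ‖fderiv ℝ φ y‖ₑ ^ 2) := by
  have : Nonempty (Fin n) := ⟨⟨0, by omega⟩⟩
  have hcf : Continuous (fderiv ℝ φ) := hφ.continuous_fderiv (by simp)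
  have hF : Measurable fun y => ‖fderiv ℝ φ y‖ₑ ^ 2 := by fun_prop
  have hw := wgt_meas p q
  set K := ∫⁻ t in Set.Ioi (0 : ℝ), ENNReal.ofReal (wgt p q t)
  have hfc : Continuous fun y => ‖fderiv ℝ φ y‖ₑ := by fun_prop
  have hxzt : Measurable fun a : (EuclideanSpace ℝ (Fin n)) × (EuclideanSpace ℝ (Fin n)) × ℝ =>
      ENNReal.ofReal ((wgt p q a.2.2)⁻¹) * ‖fderiv ℝ φ (a.1 + a.2.2 • a.2.1)‖ₑ ^ 2 := by
    refine Measurable.fun_mul (by fun_prop) ?_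
    apply Measurable.pow_const
    apply Continuous.measurable
    fun_prop
  -- pointwise in x
  have hpt : ∀ x, volume (ball (0 : EuclideanSpace ℝ (Fin n)) 1) * ‖φ x‖ₑ ^ 2 ≤
      K * ∫⁻ t in Set.Ioi (0 : ℝ), ENNReal.ofReal ((wgt p q t)⁻¹) *
        ∫⁻ z in ball (0 : EuclideanSpace ℝ (Fin n)) 1, ‖fderiv ℝ φ (x + t • z)‖ₑ ^ 2 := by
    intro x
    have hzt : Measurable fun a : (EuclideanSpace ℝ (Fin n)) × ℝ =>
      ENNReal.ofReal ((wgt p q a.2)⁻¹) * ‖fderiv ℝ φ (x + a.2 • a.1)‖ₑ ^ 2 :=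
      hxzt.comp (measurable_const.prodMk measurable_id)
    calc volume (ball (0 : EuclideanSpace ℝ (Fin n)) 1) * ‖φ x‖ₑ ^ 2
        = ∫⁻ z in ball (0 : EuclideanSpace ℝ (Fin n)) 1, ‖φ x‖ₑ ^ 2 := by
          rw [setLIntegral_const, mul_comm]
      _ ≤ ∫⁻ z in ball (0 : EuclideanSpace ℝ (Fin n)) 1, K * ∫⁻ t in Set.Ioi (0 : ℝ),
          ENNReal.ofReal ((wgt p q t)⁻¹) * ‖fderiv ℝ φ (x + t • z)‖ₑ ^ 2 := by
          apply lintegral_mono_ae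
          have h0 : ∀ᵐ z ∂(volume.restrict (ball (0 : EuclideanSpace ℝ (Fin n)) 1)), z ≠ 0 :=
            ae_restrict_of_ae (Measure.ae_ne volume 0)
          filter_upwards [h0, ae_restrict_mem measurableSet_ball] with z hz hzb
          have h1 := step1 hφ hc x z hz (mem_ball_zero_iff.1 hzb).le
          refine (pow_le_pow_left' h1 2).trans (step2 ?_ p q)
          apply Continuous.measurable
          fun_prop
      _ = K * ∫⁻ z in ball (0 : EuclideanSpace ℝ (Fin n)) 1, ∫⁻ t in Set.Ioi (0 : ℝ),
          ENNReal.ofReal ((wgt p q t)⁻¹) * ‖fderiv ℝ φ (x + t • z)‖ₑ ^ 2 := by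
          rw [lintegral_const_mul _ hzt.lintegral_prod_right']
      _ = _ := by
          rw [lintegral_lintegral_swap hzt.aemeasurable]
          congr 1
          refine lintegral_congr fun t => ?_
          rw [lintegral_const_mul' _ _ ENNReal.ofReal_ne_top]
  have hxt : Measurable fun a : (EuclideanSpace ℝ (Fin n)) × ℝ =>
      ENNReal.ofReal ((wgt p q a.2)⁻¹) *
        ∫⁻ z in ball (0 : EuclideanSpace ℝ (Fin n)) 1, ‖fderiv ℝ φ (a.1 + a.2 • z)‖ₑ ^ 2 := by
    refine Measurable.fun_mul (by fun_prop) ?_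
    have : Measurable fun a : ((EuclideanSpace ℝ (Fin n)) × ℝ) × (EuclideanSpace ℝ (Fin n)) =>
        ‖fderiv ℝ φ (a.1.1 + a.1.2 • a.2)‖ₑ ^ 2 := by
      apply Measurable.pow_const
      apply Continuous.measurable
      fun_prop
    exact this.lintegral_prod_right'
  calc volume (ball (0 : EuclideanSpace ℝ (Fin n)) 1) * ∫⁻ x, ‖φ x‖ₑ ^ 2 ∂μ
      = ∫⁻ x, volume (ball (0 : EuclideanSpace ℝ (Fin n)) 1) * ‖φ x‖ₑ ^ 2 ∂μ := by
        rw [lintegral_const_mul' _ _ measure_ball_lt_top.ne]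
    _ ≤ _ := lintegral_mono hpt
    _ = K * ∫⁻ x, (∫⁻ t in Set.Ioi (0 : ℝ), ENNReal.ofReal ((wgt p q t)⁻¹) *
        ∫⁻ z in ball (0 : EuclideanSpace ℝ (Fin n)) 1, ‖fderiv ℝ φ (x + t • z)‖ₑ ^ 2) ∂μ := by
        rw [lintegral_const_mul _ hxt.lintegral_prod_right']
    _ = K * ∫⁻ t in Set.Ioi (0 : ℝ), ENNReal.ofReal ((wgt p q t)⁻¹) *
        ∫⁻ x, (∫⁻ z in ball (0 : EuclideanSpace ℝ (Fin n)) 1,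
          ‖fderiv ℝ φ (x + t • z)‖ₑ ^ 2) ∂μ := by
        rw [lintegral_lintegral_swap hxt.aemeasurable]
        congr 1
        refine lintegral_congr fun t => ?_
        rw [lintegral_const_mul' _ _ ENNReal.ofReal_ne_top]
    _ ≤ _ := by
        gcongr
        have hD : ∫⁻ y, ‖fderiv ℝ φ y‖ₑ ^ 2 ≠ ⊤ := by
          have hcs : HasCompactSupport fun y => ‖fderiv ℝ φ y‖ ^ 2 :=
            (hc.fderiv ℝ).comp_left (g := fun v => ‖v‖ ^ 2) (by simp)
          have hi : Integrable fun y => ‖fderiv ℝ φ y‖ ^ 2 :=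
            Continuous.integrable_of_hasCompactSupport (by fun_prop) hcs
          have := hi.lintegral_lt_top.ne
          simpa [ENNReal.ofReal_pow, ofReal_norm_eq_enorm] using this
        rw [← lintegral_mul_const' _ _ hD]
        refine setLIntegral_mono' measurableSet_Ioi fun t ht => ?_
        rw [mul_assoc]
        gcongr
        exact step5 hF μ ht (m t) (hm t ht)

theorem stmt5 (n : ℕ) (hn : 3 ≤ n)
    (μ : Measure (EuclideanSpace ℝ (Fin n))) [IsFiniteMeasure μ]
    (hsupp : ∃ M : ℝ, 0 < M ∧ μ (closedBall (0 : EuclideanSpace ℝ (Fin n)) M)ᶜ = 0)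
    (Cμ α : ℝ) (hCμ : 0 ≤ Cμ) (hα : (n : ℝ) - 2 < α)
    (hdim : ∀ (x : EuclideanSpace ℝ (Fin n)) (r : ℝ), 0 < r →
      μ (ball x r) ≤ ENNReal.ofReal (Cμ * r ^ α)) :
    ∃ C : ℝ, 0 < C ∧
      ∀ φ : EuclideanSpace ℝ (Fin n) → ℝ, ContDiff ℝ (⊤ : ℕ∞) φ → HasCompactSupport φ →
        ∫ x, (φ x) ^ 2 ∂μ ≤ C * ∫ x, ‖fderiv ℝ φ x‖ ^ 2 := by
  have hn' : (3 : ℝ) ≤ n := by exact_mod_cast hn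
  set s : ℝ := (n - 2 + α) / 2 with hs
  set p : ℝ := 1 - n + s with hp
  set q : ℝ := 3 / 2 - n with hq
  set M : ℝ := Cμ + μ.real Set.univ with hM
  have hM0 : 0 ≤ M := by positivity
  let m : ℝ → ℝ≥0∞ := fun t => ENNReal.ofReal (M * wgt α 0 t)
  have hm : ∀ t, 0 < t → ∀ y, μ (ball y t) ≤ m t := by
    intro t ht y
    by_cases h : t ≤ 1
    · refine (hdim y t ht).trans (ENNReal.ofReal_le_ofReal ?_)
      simp only [wgt, h, if_true]
      gcongr
      simp [hM]
    · refine (measure_mono (Set.subset_univ _)).trans ?_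
      simp only [m, wgt, h, if_false, Real.rpow_zero, mul_one]
      rw [← ofReal_measureReal]
      exact ENNReal.ofReal_le_ofReal (by simp [hM, hCμ])
  set K := ∫⁻ t in Set.Ioi (0 : ℝ), ENNReal.ofReal (wgt p q t) with hK
  set J := ∫⁻ t in Set.Ioi (0 : ℝ), ENNReal.ofReal ((wgt p q t)⁻¹) *
        (ENNReal.ofReal ((t ^ n)⁻¹) * m t) with hJ
  have hKt : K ≠ ⊤ := (wgt_int (by linarith) (by linarith)).ne
  have hJt : J ≠ ⊤ := by
    have : J = ENNReal.ofReal M * ∫⁻ t in Set.Ioi (0 : ℝ),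
        ENNReal.ofReal (wgt (-p - n + α) (-q - n) t) := by
      rw [← lintegral_const_mul' _ _ ENNReal.ofReal_ne_top]
      refine setLIntegral_congr_fun measurableSet_Ioi fun t ht => ?_
      have ht : 0 < t := ht
      have := wgt_pos p q ht
      simp only [m]
      rw [← ENNReal.ofReal_mul (by positivity), ← ENNReal.ofReal_mul (by positivity),
        ← ENNReal.ofReal_mul (by positivity)]
      congr 1
      unfold wgt
      split_ifs
      · rw [Real.rpow_add ht (-p - n), Real.rpow_sub ht (-p), Real.rpow_neg ht.le, Real.rpow_natCast]
        field_simp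
      · rw [Real.rpow_sub ht (-q), Real.rpow_neg ht.le, Real.rpow_natCast, Real.rpow_zero]
        field_simp
    rw [this]
    exact ENNReal.mul_ne_top ENNReal.ofReal_ne_top (wgt_int (by linarith) (by linarith)).ne
  set B := volume (ball (0 : EuclideanSpace ℝ (Fin n)) 1) with hB
  have hB0 : B ≠ 0 := (measure_ball_pos _ _ one_pos).ne'
  have hBt : B ≠ ⊤ := measure_ball_lt_top.ne
  have hBr : 0 < B.toReal := ENNReal.toReal_pos hB0 hBt
  refine ⟨K.toReal * J.toReal / B.toReal + 1, by positivity, fun φ hφ hc => ?_⟩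
  have hcf : Continuous (fderiv ℝ φ) := hφ.continuous_fderiv (by simp)
  have hcs : HasCompactSupport fun y => ‖fderiv ℝ φ y‖ ^ 2 :=
    (hc.fderiv ℝ).comp_left (g := fun v => ‖v‖ ^ 2) (by simp)
  have hi : Integrable fun y => ‖fderiv ℝ φ y‖ ^ 2 :=
    Continuous.integrable_of_hasCompactSupport (by fun_prop) hcs
  have hφc : Continuous φ := hφ.continuous
  have e1 : ∫ x, (φ x) ^ 2 ∂μ = (∫⁻ x, ‖φ x‖ₑ ^ 2 ∂μ).toReal := by
    rw [integral_eq_lintegral_of_nonneg_ae (ae_of_all _ fun x => sq_nonneg _)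
      (by fun_prop)]
    congr 1
    refine lintegral_congr fun x => ?_
    rw [← ofReal_norm_eq_enorm, ← ENNReal.ofReal_pow (norm_nonneg _)]
    simp
  have e2 : ∫ x, ‖fderiv ℝ φ x‖ ^ 2 = (∫⁻ x, ‖fderiv ℝ φ x‖ₑ ^ 2).toReal := by
    rw [integral_eq_lintegral_of_nonneg_ae (ae_of_all _ fun x => sq_nonneg _)
      (by fun_prop)]
    congr 1
    refine lintegral_congr fun x => ?_
    rw [← ofReal_norm_eq_enorm, ← ENNReal.ofReal_pow (norm_nonneg _)]
  have hDt : ∫⁻ x, ‖fderiv ℝ φ x‖ₑ ^ 2 ≠ ⊤ := by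
    have := hi.lintegral_lt_top.ne
    simpa [ENNReal.ofReal_pow, ofReal_norm_eq_enorm] using this
  have key := step6 hn μ p q m hm hφ hc
  have key2 := ENNReal.toReal_mono (ENNReal.mul_ne_top hKt (ENNReal.mul_ne_top hJt hDt)) key
  rw [ENNReal.toReal_mul, ENNReal.toReal_mul, ENNReal.toReal_mul, ← e1, ← e2] at key2
  have hDn : 0 ≤ ∫ x, ‖fderiv ℝ φ x‖ ^ 2 := integral_nonneg fun x => sq_nonneg _
  have : ∫ x, (φ x) ^ 2 ∂μ ≤ K.toReal * J.toReal / B.toReal * ∫ x, ‖fderiv ℝ φ x‖ ^ 2 := by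
    rw [div_mul_eq_mul_div, le_div_iff₀ hBr]
    linarith
  linarith
end

section
/- Let μ be a compactly supported positive measure on ℝⁿ, n ≥ 3, of dimension α > n-2. Then the inclusion map j : Ḣ¹(ℝⁿ) → L²(μ) is a compact operator. -/
open MeasureTheory Metric
open scoped ENNReal

lemma cs_lint {X : Type*} [MeasurableSpace X] (ν : Measure X) {f g : X → ℝ≥0∞}
    (hf : AEMeasurable f ν) (hg : AEMeasurable g ν) :
    (∫⁻ x, f x * g x ∂ν) ^ 2 ≤ (∫⁻ x, f x ^ 2 ∂ν) * ∫⁻ x, g x ^ 2 ∂ν := by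
  have h := ENNReal.lintegral_mul_le_Lp_mul_Lq ν (Real.HolderConjugate.two_two) hf hg
  simp only [Pi.mul_apply] at h
  have h2 := pow_le_pow_left₀ zero_le h 2
  rw [mul_pow, ← ENNReal.rpow_natCast (_ ^ (1/2:ℝ)), ← ENNReal.rpow_natCast (_ ^ (1/2:ℝ)),
    ← ENNReal.rpow_mul, ← ENNReal.rpow_mul] at h2
  norm_num at h2
  exact h2

lemma two_sq (a b : ℝ≥0∞) : (a + b) ^ 2 ≤ 2 * a ^ 2 + 2 * b ^ 2 := by
  have := ENNReal.rpow_add_le_mul_rpow_add_rpow a b (p := 2) (by norm_num)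
  norm_num at this
  rwa [mul_add] at this

lemma lint_rpow (R s : ℝ) (hR : 0 < R) (hs : -1 < s) :
    ∫⁻ t in Set.Ioc 0 R, ENNReal.ofReal (t ^ s) = ENNReal.ofReal (R ^ (s + 1) / (s + 1)) := by
  have h1 := integral_rpow (a := 0) (b := R) (r := s) (Or.inl hs)
  rw [intervalIntegral.integral_of_le hR.le, Real.zero_rpow (by linarith), sub_zero] at h1
  rw [← h1, ofReal_integral_eq_lintegral_ofReal]
  · have := intervalIntegral.intervalIntegrable_rpow' (a := 0) (b := R) hs
    rwa [intervalIntegrable_iff_integrableOn_Ioc_of_le hR.le] at this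
  · filter_upwards [ae_restrict_mem measurableSet_Ioc] with t ht
    exact Real.rpow_nonneg ht.1.le _

lemma lem_A {n : ℕ} (f : EuclideanSpace ℝ (Fin n) → ℝ) (hf : ContDiff ℝ 1 f)
    (x z : EuclideanSpace ℝ (Fin n)) (hz : ‖z‖ ≤ 1) (R a : ℝ) (hR : 0 < R) (ha : a < 1) :
    ‖f (x + R • z) - f x‖ₑ ^ 2 ≤ ENNReal.ofReal (R ^ (1 - a) / (1 - a)) *
      ∫⁻ t in Set.Ioc 0 R, ENNReal.ofReal (t ^ a) * ‖fderiv ℝ f (x + t • z)‖ₑ ^ 2 := by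
  have hc : Continuous fun t : ℝ => fderiv ℝ f (x + t • z) :=
    (hf.continuous_fderiv one_ne_zero).comp (by fun_prop)
  have hcz : Continuous fun t : ℝ => fderiv ℝ f (x + t • z) z := hc.clm_apply continuous_const
  have hd : ∀ t ∈ Set.uIcc 0 R, HasDerivAt (fun t : ℝ => f (x + t • z))
      (fderiv ℝ f (x + t • z) z) t := by
    intro t _
    have h1 : HasDerivAt (fun t : ℝ => x + t • z) z t := by
      simpa using ((hasDerivAt_id t).smul_const z).const_add x
    exact ((hf.differentiable one_ne_zero _).hasFDerivAt).comp_hasDerivAt t h1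
  have h1 := intervalIntegral.integral_eq_sub_of_hasDerivAt hd (hcz.intervalIntegrable 0 R)
  simp only [zero_smul, add_zero] at h1
  rw [intervalIntegral.integral_of_le hR.le] at h1
  rw [← h1]
  calc _ ≤ (∫⁻ t in Set.Ioc 0 R, ENNReal.ofReal (t ^ (-a/2)) *
        (ENNReal.ofReal (t ^ (a/2)) * ‖fderiv ℝ f (x + t • z)‖ₑ)) ^ 2 := by
        gcongr
        refine (enorm_integral_le_lintegral_enorm _).trans ?_
        refine setLIntegral_mono' measurableSet_Ioc fun t ht => ?_
        rw [← mul_assoc, ← ENNReal.ofReal_mul (Real.rpow_nonneg ht.1.le _), ← Real.rpow_add ht.1]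
        have : -a/2 + a/2 = 0 := by ring
        rw [this, Real.rpow_zero, ENNReal.ofReal_one, one_mul]
        rw [← ofReal_norm, ← ofReal_norm]
        apply ENNReal.ofReal_le_ofReal
        calc _ ≤ ‖fderiv ℝ f (x + t • z)‖ * ‖z‖ := ContinuousLinearMap.le_opNorm _ _
          _ ≤ _ := mul_le_of_le_one_right (norm_nonneg _) hz
    _ ≤ _ := by
        refine (cs_lint _ (by fun_prop) ?_).trans ?_
        · exact (Measurable.mul (by fun_prop) hc.enorm.measurable).aemeasurable
        · have e : R ^ (1 - a) / (1 - a) = R ^ (-a + 1) / (-a + 1) := by ring_nf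
          rw [e, ← lint_rpow R (-a) hR (by linarith)]
          gcongr ?_ * ?_
          · refine setLIntegral_mono' measurableSet_Ioc fun t ht => ?_
            rw [← ENNReal.ofReal_pow (Real.rpow_nonneg ht.1.le _), ← Real.rpow_mul_natCast ht.1.le]
            norm_num
          · refine setLIntegral_mono' measurableSet_Ioc fun t ht => ?_
            rw [mul_pow, ← ENNReal.ofReal_pow (Real.rpow_nonneg ht.1.le _),
              ← Real.rpow_mul_natCast ht.1.le]
            norm_num

lemma lint_scale {n : ℕ} (h : EuclideanSpace ℝ (Fin n) → ℝ≥0∞) (hh : Measurable h)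
    (x : EuclideanSpace ℝ (Fin n)) (t : ℝ) (ht : 0 < t) :
    ∫⁻ z in ball 0 1, h (x + t • z) = ENNReal.ofReal ((t ^ n)⁻¹) * ∫⁻ y in ball x t, h y := by
  rw [← lintegral_indicator measurableSet_ball, ← lintegral_indicator measurableSet_ball]
  have h1 := lintegral_add_left_eq_self (μ := volume) ((ball x t).indicator h) x
  have hm : Measurable fun y => (ball x t).indicator h (x + y) :=
    (hh.indicator measurableSet_ball).comp (measurable_const_add x)
  have h2 := lintegral_map (μ := volume) (g := fun y : EuclideanSpace ℝ (Fin n) => t • y) hm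
    (measurable_const_smul t)
  rw [Measure.map_addHaar_smul _ ht.ne', lintegral_smul_measure, h1] at h2
  rw [finrank_euclideanSpace_fin, abs_of_pos (by positivity), smul_eq_mul] at h2
  rw [h2]
  refine lintegral_congr fun z => ?_
  by_cases hz : ‖z‖ < 1
  · rw [Set.indicator_of_mem (by simpa using hz), Set.indicator_of_mem]
    simp [norm_smul, abs_of_pos ht, hz, ht]
  · rw [Set.indicator_of_notMem (by simpa using hz), Set.indicator_of_notMem]
    simp only [mem_ball, dist_self_add_left, norm_smul, Real.norm_eq_abs, abs_of_pos ht]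
    intro hlt
    apply hz
    nlinarith

lemma lem_B {n : ℕ} (μ : Measure (EuclideanSpace ℝ (Fin n))) [IsFiniteMeasure μ]
    (Cμ α : ℝ) 
    (hdim : ∀ (x : EuclideanSpace ℝ (Fin n)) (r : ℝ), 0 < r →
      μ (ball x r) ≤ ENNReal.ofReal (Cμ * r ^ α))
    (h : EuclideanSpace ℝ (Fin n) → ℝ≥0∞) (hh : Measurable h) (t : ℝ) (ht : 0 < t) :
    ∫⁻ x, (∫⁻ z in ball 0 1, h (x + t • z)) ∂μ ≤
      ENNReal.ofReal (Cμ * t ^ (α - n)) * ∫⁻ y, h y := by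
  simp_rw [lint_scale h hh _ t ht]
  rw [lintegral_const_mul' _ _ ENNReal.ofReal_ne_top]
  have hS : MeasurableSet {p : EuclideanSpace ℝ (Fin n) × EuclideanSpace ℝ (Fin n) |
      dist p.2 p.1 < t} := (isOpen_lt (by fun_prop) continuous_const).measurableSet
  have key : ∫⁻ x, (∫⁻ y in ball x t, h y) ∂μ ≤ ENNReal.ofReal (Cμ * t ^ α) * ∫⁻ y, h y := by
    calc ∫⁻ x, (∫⁻ y in ball x t, h y) ∂μ
        = ∫⁻ x, (∫⁻ y, ({p : EuclideanSpace ℝ (Fin n) × EuclideanSpace ℝ (Fin n) |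
            dist p.2 p.1 < t}.indicator (fun p => h p.2)) (x, y)) ∂μ := by
          refine lintegral_congr fun x => ?_
          rw [← lintegral_indicator measurableSet_ball]
          rfl
      _ = ∫⁻ y, ∫⁻ x, ({p : EuclideanSpace ℝ (Fin n) × EuclideanSpace ℝ (Fin n) |
            dist p.2 p.1 < t}.indicator (fun p => h p.2)) (x, y) ∂μ := by
          refine lintegral_lintegral_swap ?_
          exact ((hh.comp measurable_snd).indicator hS).aemeasurable
      _ = ∫⁻ y, h y * μ (ball y t) := by
          refine lintegral_congr fun y => ?_
          rw [← lintegral_indicator_const measurableSet_ball]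
          refine lintegral_congr fun x => ?_
          simp [Set.indicator, dist_comm]
      _ ≤ ∫⁻ y, h y * ENNReal.ofReal (Cμ * t ^ α) := by
          gcongr with y
          exact hdim y t ht
      _ = _ := by rw [lintegral_mul_const' _ _ ENNReal.ofReal_ne_top, mul_comm]
  refine (mul_le_mul_right key _).trans ?_
  rw [← mul_assoc, ← ENNReal.ofReal_mul (by positivity)]
  gcongr ENNReal.ofReal ?_ * _
  rw [Real.rpow_sub ht, Real.rpow_natCast]
  apply le_of_eq; field_simp

lemma lem_C {n : ℕ} (μ : Measure (EuclideanSpace ℝ (Fin n))) [IsFiniteMeasure μ]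
    (Cμ α : ℝ) (hCμ : 0 ≤ Cμ) (hα : (n : ℝ) - 2 < α)
    (hdim : ∀ (x : EuclideanSpace ℝ (Fin n)) (r : ℝ), 0 < r →
      μ (ball x r) ≤ ENNReal.ofReal (Cμ * r ^ α))
    (f : EuclideanSpace ℝ (Fin n) → ℝ) (hf : ContDiff ℝ 1 f) (R : ℝ) (hR : 0 < R) :
    ∫⁻ x, (∫⁻ z in ball 0 1, ‖f (x + R • z) - f x‖ₑ ^ 2) ∂μ ≤
      ENNReal.ofReal (Cμ * R ^ (α - n + 2) / ((α - n + 2) / 2) ^ 2) *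
        ∫⁻ y, ‖fderiv ℝ f y‖ₑ ^ 2 := by
  set a : ℝ := (n - α) / 2 with ha
  have ha1 : a < 1 := by rw [ha]; linarith
  have hc := hf.continuous_fderiv one_ne_zero
  have hh : Measurable fun y => ‖fderiv ℝ f y‖ₑ ^ 2 := (hc.enorm.measurable).pow_const 2
  set K := ENNReal.ofReal (R ^ (1 - a) / (1 - a)) with hK
  have hmeas : Measurable fun p : (EuclideanSpace ℝ (Fin n) × EuclideanSpace ℝ (Fin n)) × ℝ =>
      ENNReal.ofReal (p.2 ^ a) * ‖fderiv ℝ f (p.1.1 + p.2 • p.1.2)‖ₑ ^ 2 := by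
    refine Measurable.mul (f := fun p : (EuclideanSpace ℝ (Fin n) × EuclideanSpace ℝ (Fin n)) × ℝ =>
      ENNReal.ofReal (p.2 ^ a)) (by fun_prop) ?_
    have hm : Measurable fun p : (EuclideanSpace ℝ (Fin n) × EuclideanSpace ℝ (Fin n)) × ℝ =>
      p.1.1 + p.2 • p.1.2 := by fun_prop
    exact hh.comp hm
  calc ∫⁻ x, (∫⁻ z in ball 0 1, ‖f (x + R • z) - f x‖ₑ ^ 2) ∂μ
      ≤ ∫⁻ x, (∫⁻ z in ball 0 1, K * (∫⁻ t in Set.Ioc 0 R, ENNReal.ofReal (t ^ a) *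
          ‖fderiv ℝ f (x + t • z)‖ₑ ^ 2)) ∂μ := by
        refine lintegral_mono fun x => setLIntegral_mono' measurableSet_ball fun z hz => ?_
        exact lem_A f hf x z (by simpa using (mem_ball_zero_iff.1 hz).le) R a hR ha1
    _ = K * ∫⁻ x, (∫⁻ z in ball 0 1, (∫⁻ t in Set.Ioc 0 R, ENNReal.ofReal (t ^ a) *
          ‖fderiv ℝ f (x + t • z)‖ₑ ^ 2)) ∂μ := by
        simp_rw [lintegral_const_mul' K _ ENNReal.ofReal_ne_top]
    _ = K * ∫⁻ x, (∫⁻ t in Set.Ioc 0 R, ENNReal.ofReal (t ^ a) * (∫⁻ z in ball 0 1, 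
          ‖fderiv ℝ f (x + t • z)‖ₑ ^ 2)) ∂μ := by
        congr 1
        refine lintegral_congr fun x => ?_
        rw [lintegral_lintegral_swap]
        · simp_rw [lintegral_const_mul' (ENNReal.ofReal _) _ ENNReal.ofReal_ne_top]
        · exact (hmeas.comp (f := fun p : EuclideanSpace ℝ (Fin n) × ℝ => ((x, p.1), p.2))
            (by fun_prop)).aemeasurable
    _ = K * ∫⁻ t in Set.Ioc 0 R, ENNReal.ofReal (t ^ a) * (∫⁻ x, (∫⁻ z in ball 0 1, 
          ‖fderiv ℝ f (x + t • z)‖ₑ ^ 2) ∂μ) := by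
        congr 1
        rw [lintegral_lintegral_swap]
        · simp_rw [lintegral_const_mul' (ENNReal.ofReal _) _ ENNReal.ofReal_ne_top]
        · have : Measurable fun p : (EuclideanSpace ℝ (Fin n) × ℝ) × EuclideanSpace ℝ (Fin n) =>
              ‖fderiv ℝ f (p.1.1 + p.1.2 • p.2)‖ₑ ^ 2 := by
            have hm : Measurable fun p : (EuclideanSpace ℝ (Fin n) × ℝ) ×
              EuclideanSpace ℝ (Fin n) => p.1.1 + p.1.2 • p.2 := by fun_prop
            exact hh.comp hm
          have h2 := this.lintegral_prod_right' (ν := volume.restrict (ball 0 1))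
          refine Measurable.aemeasurable ?_
          exact Measurable.mul (f := fun p : EuclideanSpace ℝ (Fin n) × ℝ =>
            ENNReal.ofReal (p.2 ^ a)) (by fun_prop) h2
    _ ≤ K * ∫⁻ t in Set.Ioc 0 R, ENNReal.ofReal (t ^ (-a)) *
          (ENNReal.ofReal Cμ * ∫⁻ y, ‖fderiv ℝ f y‖ₑ ^ 2) := by
        gcongr K * ?_
        refine setLIntegral_mono' measurableSet_Ioc fun t ht => ?_
        refine (mul_le_mul_right (lem_B μ Cμ α hdim _ hh t ht.1) _).trans ?_
        rw [← mul_assoc, ← mul_assoc, ← ENNReal.ofReal_mul (Real.rpow_nonneg ht.1.le _),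
          ← ENNReal.ofReal_mul (Real.rpow_nonneg ht.1.le _), mul_left_comm, ← Real.rpow_add ht.1]
        have : a + (α - n) = -a := by rw [ha]; ring
        rw [this, mul_comm Cμ]
    _ ≤ _ := by
        rw [lintegral_mul_const _ (by fun_prop), lint_rpow R (-a) hR (by linarith), ← mul_assoc,
          ← mul_assoc, hK, ← ENNReal.ofReal_mul (by have : 0 < 1 - a := by linarith
                                                    positivity),
          ← ENNReal.ofReal_mul (by have : 0 < 1 - a := by linarith
                                   have : 0 < -a + 1 := by linarith
                                   positivity)]
        gcongr ENNReal.ofReal ?_ * _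
        have e1 : α - n + 2 = (1 - a) + (1 - a) := by rw [ha]; ring
        have e2 : -a + 1 = 1 - a := by ring
        have h0 : (1 - a) ≠ 0 := by linarith
        rw [e1, e2, Real.rpow_add hR]
        apply le_of_eq
        have : ((1 - a) + (1 - a)) / 2 = 1 - a := by ring
        rw [this]
        field_simp

lemma lem_D {n : ℕ} (f : EuclideanSpace ℝ (Fin n) → ℝ) (hf : Continuous f)
    (hfi : HasCompactSupport f)
    (u x : EuclideanSpace ℝ (Fin n)) (ρ : ℝ) (hρ : 0 < ρ) (hx : x ∈ ball u ρ) :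
    (volume (ball u ρ)) ^ 2 * ‖f x‖ₑ ^ 2 ≤ 2 * ‖∫ y in ball u ρ, f y‖ₑ ^ 2 +
      2 * (volume (ball u ρ) * (ENNReal.ofReal ((2 * ρ) ^ n) *
        ∫⁻ z in ball 0 1, ‖f (x + (2 * ρ) • z) - f x‖ₑ ^ 2)) := by
  set V := volume (ball u ρ) with hV
  have hVt : V ≠ ⊤ := measure_ball_lt_top.ne
  have hI : IntegrableOn f (ball u ρ) := (hf.integrable_of_hasCompactSupport hfi).integrableOn
  have h1 : V * ‖f x‖ₑ ≤ ‖∫ y in ball u ρ, f y‖ₑ + ∫⁻ y in ball u ρ, ‖f y - f x‖ₑ := by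
    have e : ∫ y in ball u ρ, f x = (∫ y in ball u ρ, f y) - ∫ y in ball u ρ, (f y - f x) := by
      rw [integral_sub hI (integrableOn_const hVt)]
      ring
    have e2 : V * ‖f x‖ₑ = ‖∫ y in ball u ρ, f x‖ₑ := by
      rw [setIntegral_const, enorm_smul, measureReal_def, ← hV,
        Real.enorm_eq_ofReal (r := V.toReal) ENNReal.toReal_nonneg, ENNReal.ofReal_toReal hVt]
    rw [e2, e]
    refine enorm_sub_le.trans ?_
    gcongr
    exact enorm_integral_le_lintegral_enorm _
  have hmm : Measurable fun y => ‖f y - f x‖ₑ := (hf.sub continuous_const).enorm.measurable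
  have h2 : (∫⁻ y in ball u ρ, ‖f y - f x‖ₑ) ^ 2 ≤ V * ∫⁻ y in ball u ρ, ‖f y - f x‖ₑ ^ 2 := by
    have := cs_lint (volume.restrict (ball u ρ)) (f := fun _ => 1) (g := fun y => ‖f y - f x‖ₑ)
      (by fun_prop) hmm.aemeasurable
    simpa using this
  have h3 : ∫⁻ y in ball u ρ, ‖f y - f x‖ₑ ^ 2 ≤ ENNReal.ofReal ((2 * ρ) ^ n) *
        ∫⁻ z in ball 0 1, ‖f (x + (2 * ρ) • z) - f x‖ₑ ^ 2 := by
    rw [lint_scale (fun y => ‖f y - f x‖ₑ ^ 2) (hmm.pow_const 2) x (2 * ρ) (by positivity),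
      ← mul_assoc, ← ENNReal.ofReal_mul (by positivity), mul_inv_cancel₀ (by positivity),
      ENNReal.ofReal_one, one_mul]
    refine lintegral_mono_set ?_
    refine ball_subset_ball' ?_
    rw [mem_ball, dist_comm] at hx
    linarith
  rw [← mul_pow]
  refine (pow_le_pow_left₀ zero_le h1 2).trans ((two_sq _ _).trans ?_)
  gcongr
  exact h2.trans (by gcongr)

lemma lem_E {n : ℕ} (μ : Measure (EuclideanSpace ℝ (Fin n))) [IsFiniteMeasure μ]
    (M : ℝ) (hsupp : μ (closedBall (0 : EuclideanSpace ℝ (Fin n)) M)ᶜ = 0)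
    (Cμ α : ℝ) (hCμ : 0 ≤ Cμ) (hα : (n : ℝ) - 2 < α)
    (hdim : ∀ (x : EuclideanSpace ℝ (Fin n)) (r : ℝ), 0 < r →
      μ (ball x r) ≤ ENNReal.ofReal (Cμ * r ^ α))
    (f : EuclideanSpace ℝ (Fin n) → ℝ) (hf : ContDiff ℝ 1 f) (hfc : HasCompactSupport f)
    (G : ℝ) (hG0 : 0 ≤ G) (hG : ∫⁻ y, ‖fderiv ℝ f y‖ₑ ^ 2 ≤ ENNReal.ofReal G)
    (ρ : ℝ) (hρ : 0 < ρ) (s : Finset ℕ) (u : ℕ → EuclideanSpace ℝ (Fin n))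
    (hs : closedBall (0 : EuclideanSpace ℝ (Fin n)) M ⊆ ⋃ i ∈ s, ball (u i) ρ) :
    (volume.real (ball (0 : EuclideanSpace ℝ (Fin n)) ρ)) ^ 2 * ∫ x, f x ^ 2 ∂μ ≤
      2 * (∑ i ∈ s, (∫ y in ball (u i) ρ, f y) ^ 2) * μ.real Set.univ +
      2 * (volume.real (ball (0 : EuclideanSpace ℝ (Fin n)) ρ) * ((2 * ρ) ^ n *
        ((Cμ * (2 * ρ) ^ (α - n + 2) / ((α - n + 2) / 2) ^ 2) * G))) := by
  set V := volume (ball (0 : EuclideanSpace ℝ (Fin n)) ρ) with hV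
  have hVt : V ≠ ⊤ := measure_ball_lt_top.ne
  have hVr : V = ENNReal.ofReal (volume.real (ball (0 : EuclideanSpace ℝ (Fin n)) ρ)) := by
    rw [measureReal_def, ENNReal.ofReal_toReal hVt]
  have hsq : ∀ c : ℝ, ENNReal.ofReal (c ^ 2) = ‖c‖ₑ ^ 2 := fun c => by
    rw [← sq_abs, ENNReal.ofReal_pow (abs_nonneg _), ← Real.norm_eq_abs, ofReal_norm]
  have hL : ENNReal.ofReal (∫ x, f x ^ 2 ∂μ) = ∫⁻ x, ‖f x‖ₑ ^ 2 ∂μ := by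
    rw [ofReal_integral_eq_lintegral_ofReal]
    · simp_rw [hsq]
    · have : HasCompactSupport fun x => f x ^ 2 := by
        exact hfc.comp_left (g := fun t : ℝ => t ^ 2) (by simp)
      exact (hf.continuous.pow 2).integrable_of_hasCompactSupport this
    · exact Filter.Eventually.of_forall fun x => sq_nonneg _
  have hb0 : 0 < α - n + 2 := by linarith
  have key : V ^ 2 * ∫⁻ x, ‖f x‖ₑ ^ 2 ∂μ ≤
      2 * (∑ i ∈ s, ‖∫ y in ball (u i) ρ, f y‖ₑ ^ 2) * μ Set.univ +
      2 * (V * (ENNReal.ofReal ((2 * ρ) ^ n) *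
        (ENNReal.ofReal (Cμ * (2 * ρ) ^ (α - n + 2) / ((α - n + 2) / 2) ^ 2) *
          ENNReal.ofReal G))) := by
    calc V ^ 2 * ∫⁻ x, ‖f x‖ₑ ^ 2 ∂μ = ∫⁻ x, V ^ 2 * ‖f x‖ₑ ^ 2 ∂μ := by
          rw [lintegral_const_mul' _ _ (ENNReal.pow_ne_top hVt)]
      _ ≤ ∫⁻ x, (2 * (∑ i ∈ s, ‖∫ y in ball (u i) ρ, f y‖ₑ ^ 2) +
            2 * (V * (ENNReal.ofReal ((2 * ρ) ^ n) *
              ∫⁻ z in ball 0 1, ‖f (x + (2 * ρ) • z) - f x‖ₑ ^ 2))) ∂μ := by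
          refine lintegral_mono_ae ?_
          have hae : ∀ᵐ x ∂μ, x ∈ closedBall (0 : EuclideanSpace ℝ (Fin n)) M := hsupp
          filter_upwards [hae] with x hx
          obtain ⟨i, hi, hxi⟩ := Set.mem_iUnion₂.1 (hs hx)
          have h := lem_D f hf.continuous hfc (u i) x ρ hρ hxi
          rw [Measure.addHaar_ball_center] at h
          refine h.trans ?_
          gcongr
          exact Finset.single_le_sum (f := fun i => ‖∫ y in ball (u i) ρ, f y‖ₑ ^ 2)
            (fun _ _ => zero_le) hi
      _ = 2 * (∑ i ∈ s, ‖∫ y in ball (u i) ρ, f y‖ₑ ^ 2) * μ Set.univ +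
            2 * (V * (ENNReal.ofReal ((2 * ρ) ^ n) *
              ∫⁻ x, (∫⁻ z in ball 0 1, ‖f (x + (2 * ρ) • z) - f x‖ₑ ^ 2) ∂μ)) := by
          rw [lintegral_add_left measurable_const, lintegral_const,
            lintegral_const_mul' _ _ (by norm_num), lintegral_const_mul' _ _ hVt,
            lintegral_const_mul' _ _ ENNReal.ofReal_ne_top]
      _ ≤ _ := by
          gcongr
          refine (lem_C μ Cμ α hCμ hα hdim f hf (2 * ρ) (by positivity)).trans ?_
          gcongr
  have key2 : ENNReal.ofReal
      ((volume.real (ball (0 : EuclideanSpace ℝ (Fin n)) ρ)) ^ 2 * ∫ x, f x ^ 2 ∂μ) ≤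
      ENNReal.ofReal (2 * (∑ i ∈ s, (∫ y in ball (u i) ρ, f y) ^ 2) * μ.real Set.univ +
      2 * (volume.real (ball (0 : EuclideanSpace ℝ (Fin n)) ρ) * ((2 * ρ) ^ n *
        ((Cμ * (2 * ρ) ^ (α - n + 2) / ((α - n + 2) / 2) ^ 2) * G)))) := by
    rw [ENNReal.ofReal_mul (by positivity), ENNReal.ofReal_pow (by positivity), ← hVr, hL]
    refine key.trans (le_of_eq ?_)
    rw [ENNReal.ofReal_add (by positivity) (by positivity), ENNReal.ofReal_mul (by positivity),
      ENNReal.ofReal_mul (by positivity), ENNReal.ofReal_mul (by positivity),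
      ENNReal.ofReal_mul (by positivity), ENNReal.ofReal_mul (by positivity), ← hVr,
      ENNReal.ofReal_mul (p := Cμ * (2 * ρ) ^ (α - n + 2) / ((α - n + 2) / 2) ^ 2) (by positivity),
      ENNReal.ofReal_sum_of_nonneg (fun _ _ => sq_nonneg _)]
    simp_rw [hsq]
    rw [measureReal_def, ENNReal.ofReal_toReal (measure_ne_top _ _)]
    norm_num
  exact (ENNReal.ofReal_le_ofReal_iff (by positivity)).1 key2

lemma lem_S {n : ℕ} (hn : 3 ≤ n) (u : EuclideanSpace ℝ (Fin n)) (ρ : ℝ) :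
    ∃ C : ℝ, ∀ f : EuclideanSpace ℝ (Fin n) → ℝ, ContDiff ℝ 1 f → HasCompactSupport f →
      ∫⁻ y, ‖fderiv ℝ f y‖ₑ ^ 2 ≤ 1 → |∫ y in ball u ρ, f y| ≤ C := by
  have hn' : (3 : ℝ) ≤ n := by exact_mod_cast hn
  have hinv : (n : ℝ)⁻¹ ≤ 3⁻¹ := inv_anti₀ (by norm_num) hn'
  have hinv0 : 0 < (n : ℝ)⁻¹ := by positivity
  have hq0 : (0 : ℝ) ≤ (2⁻¹ - (n : ℝ)⁻¹)⁻¹ := inv_nonneg.2 (by linarith)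
  obtain ⟨q, hq⟩ : ∃ q : NNReal, (q : ℝ) = (2⁻¹ - (n : ℝ)⁻¹)⁻¹ := ⟨_, Real.coe_toNNReal _ hq0⟩
  have hqr : (q : ℝ)⁻¹ = 2⁻¹ - (n : ℝ)⁻¹ := by rw [hq, inv_inv]
  have hq1 : (1 : ℝ≥0∞) ≤ q := by
    have : (1 : ℝ) ≤ q := by
      rw [hq]; exact (one_le_inv₀ (by linarith)).2 (by linarith)
    exact_mod_cast this
  set S : ℝ≥0∞ := ((SNormLESNormFDerivOfEqConst ℝ
    (volume : Measure (EuclideanSpace ℝ (Fin n))) ((2 : NNReal) : ℝ) : NNReal) : ℝ≥0∞) with hS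
  set T : ℝ≥0∞ := (volume.restrict (ball u ρ)) Set.univ ^
    (1 / (1 : ℝ≥0∞).toReal - 1 / (q : ℝ≥0∞).toReal) with hT
  have hTt : T ≠ ⊤ := by
    rw [hT]
    apply ENNReal.rpow_ne_top_of_nonneg
    · simp only [ENNReal.toReal_one, ENNReal.coe_toReal, one_div, hqr]
      norm_num; linarith
    · simpa using measure_ball_lt_top.ne
  refine ⟨(S * T).toReal, fun f hf hfc hG => ?_⟩
  have h1 : eLpNorm f q volume ≤ S * eLpNorm (fderiv ℝ f) (2 : NNReal) volume :=
    eLpNorm_le_eLpNorm_fderiv_of_eq volume hf hfc (p := 2) (p' := q) (by norm_num)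
      (by simp; omega) (by simpa using hqr)
  have h2 : eLpNorm (fderiv ℝ f) (2 : NNReal) volume ≤ 1 := by
    rw [eLpNorm_nnreal_eq_lintegral (by norm_num)]
    apply ENNReal.rpow_le_one _ (by positivity)
    simpa using hG
  have h3 := eLpNorm_le_eLpNorm_mul_rpow_measure_univ (μ := volume.restrict (ball u ρ)) hq1
    hf.continuous.aestronglyMeasurable
  rw [eLpNorm_one_eq_lintegral_enorm] at h3
  have h4 : ‖∫ y in ball u ρ, f y‖ₑ ≤ S * T := by
    refine (enorm_integral_le_lintegral_enorm _).trans (h3.trans ?_)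
    gcongr
    refine (eLpNorm_restrict_le _ _ _ _).trans (h1.trans ?_)
    exact mul_le_of_le_one_right zero_le h2
  have := ENNReal.toReal_mono (ENNReal.mul_ne_top ENNReal.coe_ne_top hTt) h4
  rwa [toReal_enorm, Real.norm_eq_abs] at this

lemma lem_G {n : ℕ} (f : EuclideanSpace ℝ (Fin n) → ℝ) (hf : ContDiff ℝ 1 f)
    (hfc : HasCompactSupport f) (hb : ∫ x, ‖fderiv ℝ f x‖ ^ 2 ≤ 1) :
    ∫⁻ y, ‖fderiv ℝ f y‖ₑ ^ 2 ≤ 1 := by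
  have h1 : Integrable (fun x => ‖fderiv ℝ f x‖ ^ 2) := by
    have hc := hf.continuous_fderiv one_ne_zero
    have h0 : HasCompactSupport (fderiv ℝ f) := hfc.fderiv (𝕜 := ℝ)
    have h1 : HasCompactSupport (fun x => ‖fderiv ℝ f x‖) := h0.norm
    have hc1 : Continuous (fun x => ‖fderiv ℝ f x‖) := hc.norm
    change Integrable (fun x => (fun x => ‖fderiv ℝ f x‖) x ^ 2)
    generalize (fun x => ‖fderiv ℝ f x‖) = F at h1 hc1 ⊢
    have hc2 : Continuous (fun x => F x ^ 2) := hc1.pow 2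
    have h2 : HasCompactSupport (fun x => F x ^ 2) :=
      h1.comp_left (g := fun t : ℝ => t ^ 2) (by simp)
    exact hc2.integrable_of_hasCompactSupport h2
  have h2 := ofReal_integral_eq_lintegral_ofReal h1 (Filter.Eventually.of_forall fun x => by positivity)
  simp_rw [ENNReal.ofReal_pow (norm_nonneg _), ofReal_norm] at h2
  rw [← h2]
  simpa using hb

theorem stmt8 (n : ℕ) (hn : 3 ≤ n)
    (μ : Measure (EuclideanSpace ℝ (Fin n))) [IsFiniteMeasure μ]
    (M : ℝ) (hM : 0 < M) (hsupp : μ (closedBall (0 : EuclideanSpace ℝ (Fin n)) M)ᶜ = 0)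
    (Cμ α : ℝ) (hCμ : 0 ≤ Cμ) (hα : (n : ℝ) - 2 < α)
    (hdim : ∀ (x : EuclideanSpace ℝ (Fin n)) (r : ℝ), 0 < r →
      μ (ball x r) ≤ ENNReal.ofReal (Cμ * r ^ α))
    (φ : ℕ → EuclideanSpace ℝ (Fin n) → ℝ)
    (hφ : ∀ k, ContDiff ℝ (⊤ : ℕ∞) (φ k) ∧ HasCompactSupport (φ k))
    (hbdd : ∀ k, ∫ x, ‖fderiv ℝ (φ k) x‖ ^ 2 ≤ 1) :
    ∃ g : ℕ → ℕ, StrictMono g ∧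
      ∀ ε : ℝ, 0 < ε → ∃ N : ℕ, ∀ j k, N ≤ j → N ≤ k →
        ∫ x, (φ (g j) x - φ (g k) x) ^ 2 ∂μ ≤ ε := by
  have hφ1 : ∀ k, ContDiff ℝ 1 (φ k) := fun k => (hφ k).1.of_le (by exact_mod_cast le_top)
  have hφc : ∀ k, HasCompactSupport (φ k) := fun k => (hφ k).2
  have hG : ∀ k, ∫⁻ y, ‖fderiv ℝ (φ k) y‖ₑ ^ 2 ≤ 1 := fun k =>
    lem_G _ (hφ1 k) (hφc k) (hbdd k)
  let u : ℕ → EuclideanSpace ℝ (Fin n) := TopologicalSpace.denseSeq _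
  choose C hC using fun p : ℕ × ℕ => lem_S hn (u p.2) (1 / ((p.1 : ℝ) + 1))
  let c : ℕ → ℕ × ℕ → ℝ := fun k p => ∫ y in ball (u p.2) (1 / ((p.1 : ℝ) + 1)), φ k y
  have hcpt : IsCompact (Set.univ.pi fun p : ℕ × ℕ => Set.Icc (-C p) (C p)) :=
    isCompact_univ_pi fun p => isCompact_Icc
  obtain ⟨l, -, g, hg, hlim⟩ := hcpt.tendsto_subseq (x := c) (fun k p _ =>
    abs_le.1 (hC p (φ k) (hφ1 k) (hφc k) (hG k)))
  refine ⟨g, hg, fun ε hε => ?_⟩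
  rw [tendsto_pi_nhds] at hlim
  have hb0 : 0 < α - n + 2 := by linarith
  set ω := volume.real (ball (0 : EuclideanSpace ℝ (Fin n)) 1) with hω
  have hω0 : 0 < ω := ENNReal.toReal_pos (measure_ball_pos _ _ one_pos).ne' measure_ball_lt_top.ne
  -- choice of the scale
  have hρlim : Filter.Tendsto (fun m : ℕ => 2 * (2 ^ n *
      ((Cμ * (2 * (1 / ((m : ℝ) + 1))) ^ (α - n + 2) / ((α - n + 2) / 2) ^ 2) * 4)))
      Filter.atTop (nhds 0) := by
    have h1 : Filter.Tendsto (fun m : ℕ => (2 : ℝ) * (1 / ((m : ℝ) + 1))) Filter.atTop (nhds 0) := by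
      simpa using (tendsto_one_div_add_atTop_nhds_zero_nat (𝕜 := ℝ)).const_mul 2
    have h2 := h1.rpow_const (p := α - n + 2) (Or.inr hb0.le)
    rw [Real.zero_rpow hb0.ne'] at h2
    have h3 := ((((h2.const_mul Cμ).div_const (((α - n + 2) / 2) ^ 2)).mul_const 4).const_mul
      (2 ^ n)).const_mul 2
    simpa using h3
  obtain ⟨m, hm⟩ := (hρlim.eventually (gt_mem_nhds (show 0 < ω * (ε / 2) by positivity))).exists
  set ρ : ℝ := 1 / ((m : ℝ) + 1) with hρdef
  have hρ : 0 < ρ := by positivity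
  have : Nonempty (Fin n) := ⟨⟨0, by omega⟩⟩
  have hv : volume.real (ball (0 : EuclideanSpace ℝ (Fin n)) ρ) = ρ ^ n * ω := by
    rw [measureReal_def, Measure.addHaar_ball _ _ hρ.le, finrank_euclideanSpace_fin,
      ENNReal.toReal_mul, ENNReal.toReal_ofReal (by positivity), hω, measureReal_def]
  obtain ⟨s, hs⟩ := (isCompact_closedBall (0 : EuclideanSpace ℝ (Fin n)) M).elim_finite_subcover
    (fun i => ball (u i) ρ) (fun i => isOpen_ball) (fun x _ => by
      obtain ⟨i, hi⟩ := (TopologicalSpace.denseRange_denseSeq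
        (EuclideanSpace ℝ (Fin n))).exists_dist_lt x hρ
      exact Set.mem_iUnion.2 ⟨i, hi⟩)
  -- choice of N
  have hlim2 : Filter.Tendsto (fun p : ℕ × ℕ =>
      2 * (∑ i ∈ s, (c (g p.1) (m, i) - c (g p.2) (m, i)) ^ 2) * μ.real Set.univ)
      (Filter.atTop ×ˢ Filter.atTop) (nhds 0) := by
    have h1 : ∀ i, Filter.Tendsto (fun p : ℕ × ℕ => (c (g p.1) (m, i) - c (g p.2) (m, i)) ^ 2)
        (Filter.atTop ×ˢ Filter.atTop) (nhds 0) := fun i => by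
      have := (((hlim (m, i)).comp Filter.tendsto_fst).sub
        ((hlim (m, i)).comp (Filter.tendsto_snd (f := (Filter.atTop : Filter ℕ))))).pow 2
      simpa using this
    have h2 := ((tendsto_finsetSum s fun i _ => h1 i).const_mul 2).mul_const (μ.real Set.univ)
    simpa using h2
  set v := volume.real (ball (0 : EuclideanSpace ℝ (Fin n)) ρ) with hvdef
  have hv0 : 0 < v := by rw [hv]; positivity
  have hev := hlim2.eventually (gt_mem_nhds (show 0 < v ^ 2 * (ε / 2) by positivity))
  rw [Filter.prod_atTop_atTop_eq] at hev
  obtain ⟨⟨N1, N2⟩, hN⟩ := Filter.eventually_atTop.1 hev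
  refine ⟨max N1 N2, fun j k hj hk => ?_⟩
  have hN' := hN (j, k) ⟨(le_max_left _ _).trans hj, (le_max_right _ _).trans hk⟩
  have hdG : ∫⁻ y, ‖fderiv ℝ (fun x => φ (g j) x - φ (g k) x) y‖ₑ ^ 2 ≤ ENNReal.ofReal 4 := by
    calc _ ≤ ∫⁻ y, (2 * ‖fderiv ℝ (φ (g j)) y‖ₑ ^ 2 + 2 * ‖fderiv ℝ (φ (g k)) y‖ₑ ^ 2) := by
          refine lintegral_mono fun y => ?_
          simp only
          rw [fderiv_fun_sub ((hφ1 _).differentiable one_ne_zero _)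
            ((hφ1 _).differentiable one_ne_zero _)]
          refine le_trans ?_ (two_sq _ _)
          gcongr
          exact enorm_sub_le
      _ = 2 * (∫⁻ y, ‖fderiv ℝ (φ (g j)) y‖ₑ ^ 2) + 2 * ∫⁻ y, ‖fderiv ℝ (φ (g k)) y‖ₑ ^ 2 := by
          rw [lintegral_add_left, lintegral_const_mul' _ _ (by norm_num),
            lintegral_const_mul' _ _ (by norm_num)]
          exact ((((hφ1 _).continuous_fderiv one_ne_zero).enorm.measurable).pow_const 2).const_mul 2
      _ ≤ 2 * 1 + 2 * 1 := by gcongr <;> exact hG _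
      _ = _ := by norm_num
  have hE := lem_E μ M hsupp Cμ α hCμ hα hdim (fun x => φ (g j) x - φ (g k) x)
    ((hφ1 _).sub (hφ1 _)) ((hφc _).sub (hφc _)) 4 (by norm_num) hdG ρ hρ s u hs
  have hci : ∀ i, ∫ y in ball (u i) ρ, (φ (g j) y - φ (g k) y) =
      c (g j) (m, i) - c (g k) (m, i) := fun i =>
    integral_sub ((hφ1 _).continuous.integrable_of_hasCompactSupport (hφc _)).integrableOn
      ((hφ1 _).continuous.integrable_of_hasCompactSupport (hφc _)).integrableOn
  simp_rw [hci] at hE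
  rw [← hvdef] at hE
  set A := Cμ * (2 * ρ) ^ (α - n + 2) / ((α - n + 2) / 2) ^ 2 * 4
  have h5 : 2 * (v * ((2 * ρ) ^ n * A)) ≤ v ^ 2 * (ε / 2) := by
    have : 2 * (v * ((2 * ρ) ^ n * A)) = (v * ρ ^ n) * (2 * (2 ^ n * A)) := by
      rw [mul_pow]; ring
    rw [this]
    calc _ ≤ (v * ρ ^ n) * (ω * (ε / 2)) := by gcongr
      _ = v * (ρ ^ n * ω) * (ε / 2) := by ring
      _ = _ := by rw [← hv]; ring
  have h6 : v ^ 2 * ∫ x, (φ (g j) x - φ (g k) x) ^ 2 ∂μ ≤ v ^ 2 * ε := by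
    simp only at hN'
    linarith
  exact le_of_mul_le_mul_left h6 (by positivity)
end

section
/- Let μ be a compactly supported signed measure on ℝⁿ, n ≥ 3, of dimension α > n-2. Then for every a > 0 there exists b = b(a) < ∞ such that |∫_{ℝⁿ} |φ(x)|² dμ(x)| ≤ a ‖φ‖²_{Ḣ¹} + b ‖φ‖²_{L²(ℝⁿ)} for all φ ∈ H¹(ℝⁿ). In particular, the quadratic form of μ is infinitesimally form-bounded relative to −Δ. -/
open MeasureTheory Metric

/-- Tonelli plus change of variables: the averaged translate bound. -/
lemma aux_avg {n : ℕ} (ν : Measure (EuclideanSpace ℝ (Fin n))) [IsFiniteMeasure ν]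
    (Cμ α : ℝ)
    (hdim : ∀ (x : EuclideanSpace ℝ (Fin n)) (r : ℝ), 0 < r →
      ν (ball x r) ≤ ENNReal.ofReal (Cμ * r ^ α))
    (h : EuclideanSpace ℝ (Fin n) → ENNReal) (hh : Measurable h)
    (t δ : ℝ) (ht : 0 < t) (hδ : 0 < δ) :
    ∫⁻ x, ∫⁻ y in ball 0 δ, h (x + t • y) ∂volume ∂ν ≤
      ENNReal.ofReal (t ^ (-(n:ℝ))) * ENNReal.ofReal (Cμ * (t * δ) ^ α) * ∫⁻ z, h z := by
  have hS : MeasurableSet {p : EuclideanSpace ℝ (Fin n) × EuclideanSpace ℝ (Fin n) |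
      dist p.2 p.1 < t * δ} := by
    apply (isOpen_lt _ _).measurableSet <;> fun_prop
  have h1 : ∀ x, ∫⁻ y in ball 0 δ, h (x + t • y) ∂volume =
      ENNReal.ofReal (t ^ (-(n:ℝ))) * ∫⁻ z, (ball x (t*δ)).indicator h z := by
    intro x
    have e1 : ∫⁻ z, (ball x (t*δ)).indicator h z
        = ∫⁻ z, (ball x (t*δ)).indicator h (x + z) :=
      (lintegral_add_left_eq_self _ x).symm
    have hm : Measurable fun z => (ball x (t*δ)).indicator h (x + z) :=
      (hh.indicator measurableSet_ball).comp (measurable_const_add x)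
    have e2 : ∫⁻ y, (ball x (t*δ)).indicator h (x + t • y) =
        ENNReal.ofReal (t ^ (-(n:ℝ))) * ∫⁻ z, (ball x (t*δ)).indicator h (x + z) := by
      rw [← lintegral_map (f := fun z => (ball x (t*δ)).indicator h (x + z))
        (g := fun y => t • y) hm (measurable_const_smul t),
        Measure.map_addHaar_smul volume ht.ne', lintegral_smul_measure]
      congr 2
      rw [finrank_euclideanSpace_fin, Real.rpow_neg ht.le, Real.rpow_natCast,
        abs_of_pos (by positivity)]
    rw [e1, ← e2, ← lintegral_indicator measurableSet_ball]
    congr 1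
    ext y
    simp only [Set.indicator, mem_ball, dist_self_add_left, dist_zero_right, norm_smul,
      Real.norm_eq_abs, abs_of_pos ht, mul_lt_mul_iff_right₀ ht]
  simp_rw [h1]
  have hmeas : Measurable (Function.uncurry fun (x z : EuclideanSpace ℝ (Fin n)) =>
      (ball x (t*δ)).indicator h z) := by
    have := (hh.comp measurable_snd).indicator hS
    convert this using 1
    ext ⟨x, z⟩
    simp [Function.uncurry, Set.indicator]
  rw [lintegral_const_mul' _ _ ENNReal.ofReal_ne_top, mul_assoc,
    lintegral_lintegral_swap hmeas.aemeasurable]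
  gcongr
  rw [← lintegral_const_mul _ hh]
  refine lintegral_mono fun z => ?_
  calc ∫⁻ x, (ball x (t*δ)).indicator h z ∂ν
      = ∫⁻ x, (ball z (t*δ)).indicator (fun _ => h z) x ∂ν := by
        congr 1; ext x
        simp only [Set.indicator, mem_ball, dist_comm]
    _ = h z * ν (ball z (t*δ)) := by
        rw [lintegral_indicator measurableSet_ball, setLIntegral_const]
    _ ≤ _ := by
        rw [mul_comm]
        gcongr
        exact hdim z _ (by positivity)

lemma aux_cs (ε : ℝ) (G : ℝ → ENNReal) (hG : Measurable G) :
    (∫⁻ t in Set.Ioo (0:ℝ) 1, G t) ^ 2 ≤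
      (∫⁻ t in Set.Ioo (0:ℝ) 1, ENNReal.ofReal (t ^ (ε/2-1))) *
      ∫⁻ t in Set.Ioo (0:ℝ) 1, ENNReal.ofReal (t ^ (1-ε/2)) * G t ^ 2 := by
  have hc := ENNReal.lintegral_mul_le_Lp_mul_Lq (volume.restrict (Set.Ioo (0:ℝ) 1))
    (p := 2) (q := 2) (by constructor <;> norm_num)
    (f := fun t => ENNReal.ofReal (t ^ ((ε/2-1)/2)))
    (g := fun t => ENNReal.ofReal (t ^ ((1-ε/2)/2)) * G t)
    (by fun_prop) (by fun_prop)
  have e0 : ∫⁻ t in Set.Ioo (0:ℝ) 1, G t = ∫⁻ t in Set.Ioo (0:ℝ) 1,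
      ((fun t => ENNReal.ofReal (t ^ ((ε/2-1)/2))) *
        (fun t => ENNReal.ofReal (t ^ ((1-ε/2)/2)) * G t)) t := by
    refine setLIntegral_congr_fun measurableSet_Ioo fun t ht => ?_
    simp only [Pi.mul_apply]
    rw [← mul_assoc, ← ENNReal.ofReal_mul (Real.rpow_nonneg ht.1.le _),
      ← Real.rpow_add ht.1]
    ring_nf
    simp
  have e1 : ∫⁻ t in Set.Ioo (0:ℝ) 1, (ENNReal.ofReal (t ^ ((ε/2-1)/2))) ^ (2:ℝ) =
      ∫⁻ t in Set.Ioo (0:ℝ) 1, ENNReal.ofReal (t ^ (ε/2-1)) := by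
    refine setLIntegral_congr_fun measurableSet_Ioo fun t ht => ?_
    rw [ENNReal.ofReal_rpow_of_nonneg (Real.rpow_nonneg ht.1.le _) (by norm_num),
      ← Real.rpow_mul ht.1.le]
    ring_nf
  have e2 : ∫⁻ t in Set.Ioo (0:ℝ) 1, (ENNReal.ofReal (t ^ ((1-ε/2)/2)) * G t) ^ (2:ℝ) =
      ∫⁻ t in Set.Ioo (0:ℝ) 1, ENNReal.ofReal (t ^ (1-ε/2)) * G t ^ 2 := by
    refine setLIntegral_congr_fun measurableSet_Ioo fun t ht => ?_
    rw [ENNReal.mul_rpow_of_nonneg _ _ (by norm_num),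
      ENNReal.ofReal_rpow_of_nonneg (Real.rpow_nonneg ht.1.le _) (by norm_num),
      ← Real.rpow_mul ht.1.le, ENNReal.rpow_two]
    ring_nf
  rw [← e0, e1, e2, ← ENNReal.mul_rpow_of_nonneg _ _ (by norm_num)] at hc
  calc _ ≤ _ := pow_le_pow_left' hc 2
    _ = _ := by
      rw [← ENNReal.rpow_two, ← ENNReal.rpow_mul]; norm_num

lemma aux_pt {n : ℕ} (ε : ℝ) (φ : EuclideanSpace ℝ (Fin n) → ℝ)
    (hφ : ContDiff ℝ (⊤ : ℕ∞) φ) (δ : ℝ) (x y : EuclideanSpace ℝ (Fin n))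
    (hy : ‖y‖ < δ) :
    ‖φ x‖ₑ ^ 2 ≤ 2 * ‖φ (x + (1:ℝ) • y)‖ₑ ^ 2 +
      2 * ((∫⁻ t in Set.Ioo (0:ℝ) 1, ENNReal.ofReal (t ^ (ε/2-1))) * ENNReal.ofReal (δ^2)) *
      ∫⁻ t in Set.Ioo (0:ℝ) 1, ENNReal.ofReal (t ^ (1-ε/2)) * ‖fderiv ℝ φ (x + t • y)‖ₑ ^ 2 := by
  have hd : Continuous (fderiv ℝ φ) := hφ.continuous_fderiv (by simp)
  have hcont : Continuous fun t : ℝ => fderiv ℝ φ (x + t • y) := by fun_prop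
  have hcont2 : Continuous fun t : ℝ => fderiv ℝ φ (x + t • y) y := by fun_prop
  have ftc : ∫ t in (0:ℝ)..1, fderiv ℝ φ (x + t • y) y = φ (x + (1:ℝ) • y) - φ x := by
    rw [intervalIntegral.integral_eq_sub_of_hasDerivAt (f := fun t : ℝ => φ (x + t • y))]
    · simp
    · intro t _
      have h1 : HasDerivAt (fun t : ℝ => x + t • y) y t := by
        simpa using ((hasDerivAt_id t).smul_const y).const_add x
      exact ((hφ.differentiable (by simp) _).hasFDerivAt).comp_hasDerivAt t h1
    · exact hcont2.intervalIntegrable _ _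
  have hyδ : ‖y‖ₑ ≤ ENNReal.ofReal δ := by
    rw [← ofReal_norm]; exact ENNReal.ofReal_le_ofReal hy.le
  have b1 : ‖φ (x + (1:ℝ) • y) - φ x‖ₑ ≤
      ENNReal.ofReal δ * ∫⁻ t in Set.Ioo (0:ℝ) 1, ‖fderiv ℝ φ (x + t • y)‖ₑ := by
    rw [← ftc, intervalIntegral.integral_of_le zero_le_one, integral_Ioc_eq_integral_Ioo]
    refine (enorm_integral_le_lintegral_enorm _).trans ?_
    rw [← lintegral_const_mul' _ _ ENNReal.ofReal_ne_top]
    refine lintegral_mono fun t => ?_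
    refine (ContinuousLinearMap.le_opENorm _ _).trans ?_
    rw [mul_comm]
    gcongr
  have b2 : ‖φ x‖ₑ ≤ ‖φ (x + (1:ℝ) • y)‖ₑ + ‖φ (x + (1:ℝ) • y) - φ x‖ₑ := by
    calc ‖φ x‖ₑ = ‖φ (x + (1:ℝ) • y) - (φ (x + (1:ℝ) • y) - φ x)‖ₑ := by congr 1; ring
      _ ≤ _ := enorm_sub_le
  have b3 := aux_cs ε (fun t => ‖fderiv ℝ φ (x + t • y)‖ₑ) (by fun_prop)
  have sq : ∀ u v : ENNReal, (u + v)^2 ≤ 2 * u^2 + 2 * v^2 := by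
    intro u v
    have := ENNReal.rpow_add_le_mul_rpow_add_rpow u v (p := 2) (by norm_num)
    norm_num at this
    rwa [mul_add] at this
  calc ‖φ x‖ₑ ^ 2 ≤ _ := pow_le_pow_left' b2 2
    _ ≤ _ := sq _ _
    _ ≤ 2 * ‖φ (x + (1:ℝ) • y)‖ₑ ^ 2 + 2 * (ENNReal.ofReal δ * ∫⁻ t in Set.Ioo (0:ℝ) 1, ‖fderiv ℝ φ (x + t • y)‖ₑ)^2 := by gcongr
    _ ≤ _ := by
      rw [mul_pow, ← ENNReal.ofReal_pow ((norm_nonneg y).trans hy.le)]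
      refine (add_le_add le_rfl (mul_le_mul' le_rfl (mul_le_mul' le_rfl b3))).trans (le_of_eq ?_)
      simp only [mul_assoc, mul_comm]

lemma aux_main {n : ℕ} (ν : Measure (EuclideanSpace ℝ (Fin n))) [IsFiniteMeasure ν]
    (Cμ α : ℝ) (hC : 0 ≤ Cμ)
    (hdim : ∀ (x : EuclideanSpace ℝ (Fin n)) (r : ℝ), 0 < r →
      ν (ball x r) ≤ ENNReal.ofReal (Cμ * r ^ α))
    (ε : ℝ) (hε : ε = α - n + 2) (φ : EuclideanSpace ℝ (Fin n) → ℝ)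
    (hφ : ContDiff ℝ (⊤ : ℕ∞) φ) (δ : ℝ) (hδ : 0 < δ) (K : ENNReal)
    (hKt : K ≠ ⊤)
    (hK : K = ∫⁻ t in Set.Ioo (0:ℝ) 1, ENNReal.ofReal (t ^ (ε/2-1))) :
    volume (ball (0 : EuclideanSpace ℝ (Fin n)) δ) * ∫⁻ x, ‖φ x‖ₑ ^ 2 ∂ν ≤
      ENNReal.ofReal 2 * ENNReal.ofReal (Cμ * δ ^ α) * (∫⁻ z, ‖φ z‖ₑ ^ 2) +
      ENNReal.ofReal 2 * (K * ENNReal.ofReal (δ^2)) * (K * ENNReal.ofReal (Cμ * δ ^ α)) *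
        ∫⁻ z, ‖fderiv ℝ φ z‖ₑ ^ 2 := by
  have hd : Continuous (fderiv ℝ φ) := hφ.continuous_fderiv (by simp)
  have hc : Continuous φ := hφ.continuous
  have hvt : volume (ball (0 : EuclideanSpace ℝ (Fin n)) δ) ≠ ⊤ := measure_ball_lt_top.ne
  rw [ENNReal.ofReal_ofNat]
  set W := 2 * (K * ENNReal.ofReal (δ^2)) with hW
  have hWt : W ≠ ⊤ := by finiteness
  let H : ℝ → EuclideanSpace ℝ (Fin n) → EuclideanSpace ℝ (Fin n) → ENNReal :=
    fun t x y => ENNReal.ofReal (t ^ (1-ε/2)) * ‖fderiv ℝ φ (x + t • y)‖ₑ ^ 2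
  have hHm : Measurable fun p : ℝ × EuclideanSpace ℝ (Fin n) × EuclideanSpace ℝ (Fin n) =>
      H p.1 p.2.1 p.2.2 := by
    have : Measurable fun p : ℝ × EuclideanSpace ℝ (Fin n) × EuclideanSpace ℝ (Fin n) =>
      ‖fderiv ℝ φ (p.2.1 + p.1 • p.2.2)‖ₑ := by
      apply Continuous.measurable; fun_prop
    exact (by fun_prop : Measurable fun p : ℝ × EuclideanSpace ℝ (Fin n) × EuclideanSpace ℝ (Fin n) => ENNReal.ofReal (p.1 ^ (1-ε/2))).mul (this.pow_const 2)
  have hmx : ∀ x, Measurable fun y : EuclideanSpace ℝ (Fin n) =>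
      2 * ‖φ (x + (1:ℝ) • y)‖ₑ ^ 2 := by
    intro x
    have : Measurable fun y : EuclideanSpace ℝ (Fin n) => ‖φ (x + (1:ℝ) • y)‖ₑ := by
      apply Continuous.measurable; fun_prop
    exact (this.pow_const 2).const_mul 2
  have s1 : ∀ x, volume (ball (0 : EuclideanSpace ℝ (Fin n)) δ) * ‖φ x‖ₑ ^ 2 ≤
      2 * (∫⁻ y in ball 0 δ, ‖φ (x + (1:ℝ) • y)‖ₑ ^ 2) +
      W * ∫⁻ t in Set.Ioo (0:ℝ) 1, ∫⁻ y in ball 0 δ, H t x y := by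
    intro x
    have hsw : ∫⁻ t in Set.Ioo (0:ℝ) 1, ∫⁻ y in ball 0 δ, H t x y =
        ∫⁻ y in ball 0 δ, ∫⁻ t in Set.Ioo (0:ℝ) 1, H t x y := by
      apply lintegral_lintegral_swap
      exact (hHm.comp (by fun_prop : Measurable fun p : ℝ × EuclideanSpace ℝ (Fin n) => (p.1, x, p.2))).aemeasurable
    rw [hsw, ← lintegral_const_mul' _ _ (by simp), ← lintegral_const_mul' _ _ hWt,
      ← lintegral_add_left (hmx x), mul_comm, ← setLIntegral_const]
    refine setLIntegral_mono' measurableSet_ball fun y hy => ?_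
    have := aux_pt ε φ hφ δ x y (by simpa using hy)
    rw [← hK] at this
    exact this
  have s2 : ∫⁻ x, ∫⁻ t in Set.Ioo (0:ℝ) 1, ∫⁻ y in ball 0 δ, H t x y ∂volume ∂volume ∂ν ≤
      (K * ENNReal.ofReal (Cμ * δ ^ α)) * ∫⁻ z, ‖fderiv ℝ φ z‖ₑ ^ 2 := by
    rw [lintegral_lintegral_swap]
    · rw [hK, mul_assoc, ← lintegral_mul_const _ (by fun_prop)]
      refine setLIntegral_mono' measurableSet_Ioo fun t ht => ?_
      have ht0 : 0 < t := ht.1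
      have := aux_avg ν Cμ α hdim (fun z => ‖fderiv ℝ φ z‖ₑ ^ 2) (by fun_prop) t δ ht.1 hδ
      calc ∫⁻ x, ∫⁻ y in ball 0 δ, H t x y ∂volume ∂ν
          = ENNReal.ofReal (t ^ (1-ε/2)) * ∫⁻ x, ∫⁻ y in ball 0 δ, ‖fderiv ℝ φ (x + t • y)‖ₑ ^ 2 ∂volume ∂ν := by
            simp only [H]
            rw [← lintegral_const_mul' _ _ ENNReal.ofReal_ne_top]
            congr 1; ext x
            rw [← lintegral_const_mul' _ _ ENNReal.ofReal_ne_top]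
        _ ≤ ENNReal.ofReal (t ^ (1-ε/2)) * (ENNReal.ofReal (t ^ (-(n:ℝ))) *
              ENNReal.ofReal (Cμ * (t * δ) ^ α) * ∫⁻ z, ‖fderiv ℝ φ z‖ₑ ^ 2) :=
            mul_le_mul' le_rfl this
        _ = _ := by
            rw [← mul_assoc, ← mul_assoc, ← mul_assoc]
            congr 1
            rw [← ENNReal.ofReal_mul (by positivity), ← ENNReal.ofReal_mul (by positivity),
              ← ENNReal.ofReal_mul (by positivity)]
            congr 1
            rw [Real.mul_rpow ht0.le hδ.le]
            have : t ^ (ε/2-1) = t ^ (1-ε/2) * t ^ (-(n:ℝ)) * t ^ α := by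
              rw [← Real.rpow_add ht0, ← Real.rpow_add ht0]
              congr 1; rw [hε]; ring
            rw [this]; ring
    · have : Measurable fun p : (EuclideanSpace ℝ (Fin n) × ℝ) × EuclideanSpace ℝ (Fin n) =>
          H p.1.2 p.1.1 p.2 := hHm.comp (by fun_prop : Measurable fun p : (EuclideanSpace ℝ (Fin n) × ℝ) × EuclideanSpace ℝ (Fin n) => (p.1.2, p.1.1, p.2))
      exact (this.lintegral_prod_right' (ν := volume.restrict (ball 0 δ))).aemeasurable
  have s3 : ∫⁻ x, ∫⁻ y in ball 0 δ, ‖φ (x + (1:ℝ) • y)‖ₑ ^ 2 ∂volume ∂ν ≤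
      ENNReal.ofReal (Cμ * δ ^ α) * ∫⁻ z, ‖φ z‖ₑ ^ 2 := by
    simpa using aux_avg ν Cμ α hdim (fun z => ‖φ z‖ₑ ^ 2) (by fun_prop) 1 δ one_pos hδ
  have hm1 : Measurable fun x => 2 * ∫⁻ y in ball 0 δ, ‖φ (x + (1:ℝ) • y)‖ₑ ^ 2 := by
    have : Measurable fun p : EuclideanSpace ℝ (Fin n) × EuclideanSpace ℝ (Fin n) =>
      ‖φ (p.1 + (1:ℝ) • p.2)‖ₑ ^ 2 := by
      apply Measurable.pow_const; apply Continuous.measurable; fun_prop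
    exact (this.lintegral_prod_right' (ν := volume.restrict (ball 0 δ))).const_mul 2
  rw [← lintegral_const_mul' _ _ hvt]
  refine (lintegral_mono s1).trans ?_
  rw [lintegral_add_left hm1, lintegral_const_mul' _ _ (by simp),
    lintegral_const_mul' _ _ hWt]
  refine (add_le_add (mul_le_mul' le_rfl s3) (mul_le_mul' le_rfl s2)).trans (le_of_eq ?_)
  simp only [mul_assoc]


/-- A compactly supported `α`-dimensional signed measure `μ` on `ℝⁿ`
(`n ≥ 3`, `α > n-2`) is infinitesimally form-bounded relative to `−Δ`: for every `a > 0`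
there is `b < ∞` with `|∫ |φ|² dμ| ≤ a ‖∇φ‖₂² + b ‖φ‖₂²` for all test functions `φ`.
The integral against the signed measure is the difference of integrals against the
positive and negative parts of its Jordan decomposition. -/
theorem stmt9 (n : ℕ) (hn : 3 ≤ n)
    (μ : SignedMeasure (EuclideanSpace ℝ (Fin n)))
    (M : ℝ) (hM : 0 < M)
    (hsupp : μ.totalVariation (closedBall (0 : EuclideanSpace ℝ (Fin n)) M)ᶜ = 0)
    (Cμ α : ℝ) (hCμ : 0 ≤ Cμ) (hα : (n : ℝ) - 2 < α)
    (hdim : ∀ (x : EuclideanSpace ℝ (Fin n)) (r : ℝ), 0 < r →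
      μ.totalVariation (ball x r) ≤ ENNReal.ofReal (Cμ * r ^ α)) :
    ∀ a : ℝ, 0 < a → ∃ b : ℝ,
      ∀ φ : EuclideanSpace ℝ (Fin n) → ℝ, ContDiff ℝ (⊤ : ℕ∞) φ → HasCompactSupport φ →
        |(∫ x, (φ x) ^ 2 ∂μ.toJordanDecomposition.posPart) -
            ∫ x, (φ x) ^ 2 ∂μ.toJordanDecomposition.negPart|
          ≤ a * (∫ x, ‖fderiv ℝ φ x‖ ^ 2) + b * ∫ x, (φ x) ^ 2 := by
  intro a ha
  set ν := μ.totalVariation with hν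
  have : IsFiniteMeasure ν := by rw [hν]; unfold SignedMeasure.totalVariation; infer_instance
  obtain ⟨ε, hε⟩ : ∃ ε : ℝ, ε = α - n + 2 := ⟨_, rfl⟩
  have hε0 : 0 < ε := by linarith
  obtain ⟨K, hK⟩ : ∃ K, K = ∫⁻ t in Set.Ioo (0:ℝ) 1, ENNReal.ofReal (t ^ (ε/2-1)) := ⟨_, rfl⟩
  have hKt : K ≠ ⊤ := by
    have hi : IntegrableOn (fun t : ℝ => t ^ (ε/2-1)) (Set.Ioo 0 1) :=
      (intervalIntegral.integrableOn_Ioo_rpow_iff one_pos).2 (by linarith)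
    rw [hK]
    exact (Integrable.lintegral_lt_top hi).ne
  obtain ⟨v, hv⟩ : ∃ v, v = (volume (ball (0 : EuclideanSpace ℝ (Fin n)) 1)).toReal := ⟨_, rfl⟩
  have hv0 : 0 < v := by
    rw [hv]; exact ENNReal.toReal_pos (measure_ball_pos _ _ one_pos).ne' measure_ball_lt_top.ne
  have hV : ∀ δ : ℝ, 0 < δ → volume (ball (0 : EuclideanSpace ℝ (Fin n)) δ)
      = ENNReal.ofReal (δ ^ (n:ℝ) * v) := by
    intro δ hδ
    rw [Measure.addHaar_ball_of_pos _ _ hδ, finrank_euclideanSpace_fin, hv,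
      ENNReal.ofReal_mul (by positivity), ENNReal.ofReal_toReal measure_ball_lt_top.ne,
      Real.rpow_natCast]
  set k := K.toReal with hk
  have hk0 : 0 ≤ k := ENNReal.toReal_nonneg
  obtain ⟨δ, hδ, hδa⟩ : ∃ δ : ℝ, 0 < δ ∧ 2 * k^2 * Cμ / v * δ ^ ε ≤ a := by
    have hD : 0 ≤ 2 * k^2 * Cμ / v := by positivity
    refine ⟨(a / (2 * k^2 * Cμ / v + 1)) ^ (1/ε), by positivity, ?_⟩
    rw [← Real.rpow_mul (by positivity), one_div, inv_mul_cancel₀ hε0.ne', Real.rpow_one,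
      ← mul_div_assoc, div_le_iff₀ (by positivity)]
    nlinarith
  refine ⟨2 * Cμ * δ ^ α / (δ ^ (n:ℝ) * v), fun φ hφ hcs => ?_⟩
  have hc : Continuous φ := hφ.continuous
  have hd : Continuous (fderiv ℝ φ) := hφ.continuous_fderiv (by simp)
  have hcs2 : HasCompactSupport fun x => φ x ^ 2 :=
    hcs.comp_left (g := fun t : ℝ => t ^ 2) (by simp)
  have hcs3 : HasCompactSupport fun x => ‖fderiv ℝ φ x‖ ^ 2 :=
    (hcs.fderiv ℝ).comp_left (g := fun t => ‖t‖ ^ 2) (by simp)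
  have hi : ∀ (m : Measure (EuclideanSpace ℝ (Fin n))) [IsFiniteMeasure m],
      Integrable (fun x => φ x ^ 2) m := fun m _ =>
    (by fun_prop : Continuous fun x => φ x ^ 2).integrable_of_hasCompactSupport hcs2
  have hiv : Integrable (fun x => φ x ^ 2) (volume : Measure (EuclideanSpace ℝ (Fin n))) :=
    (by fun_prop : Continuous fun x => φ x ^ 2).integrable_of_hasCompactSupport hcs2
  have hid : Integrable (fun x => ‖fderiv ℝ φ x‖ ^ 2)
      (volume : Measure (EuclideanSpace ℝ (Fin n))) :=
    (by fun_prop : Continuous fun x => ‖fderiv ℝ φ x‖ ^ 2).integrable_of_hasCompactSupport hcs3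
  have eφ : ∀ x, ‖φ x‖ₑ ^ 2 = ENNReal.ofReal (φ x ^ 2) := by
    intro x
    rw [← ofReal_norm, ← ENNReal.ofReal_pow (norm_nonneg _), Real.norm_eq_abs, sq_abs]
  have ed : ∀ x, ‖fderiv ℝ φ x‖ₑ ^ 2 = ENNReal.ofReal (‖fderiv ℝ φ x‖ ^ 2) := by
    intro x
    rw [← ofReal_norm, ← ENNReal.ofReal_pow (norm_nonneg _)]
  have main := aux_main ν Cμ α hCμ hdim ε hε φ hφ δ hδ K hKt hK
  simp_rw [eφ, ed] at main
  have nn : ∀ m : Measure (EuclideanSpace ℝ (Fin n)), 0 ≤ ∫ x, φ x ^ 2 ∂m := fun m =>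
    integral_nonneg fun x => sq_nonneg _
  have nd : 0 ≤ ∫ x, ‖fderiv ℝ φ x‖ ^ 2 := integral_nonneg fun x => sq_nonneg _
  rw [← ofReal_integral_eq_lintegral_ofReal (hi ν) (ae_of_all _ fun x => sq_nonneg _),
    ← ofReal_integral_eq_lintegral_ofReal hiv (ae_of_all _ fun x => sq_nonneg _),
    ← ofReal_integral_eq_lintegral_ofReal hid (ae_of_all _ fun x => sq_nonneg _),
    hV δ hδ, ← ENNReal.ofReal_toReal hKt, ← hk] at main
  have nν := nn ν
  have nvv := nn volume
  have hA : 0 ≤ Cμ * δ ^ α := by positivity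
  rw [← ENNReal.ofReal_mul (by positivity), ← ENNReal.ofReal_mul (by positivity),
    ← ENNReal.ofReal_mul (by positivity), ← ENNReal.ofReal_mul (by positivity),
    ← ENNReal.ofReal_mul (by positivity), ← ENNReal.ofReal_mul (by positivity),
    ← ENNReal.ofReal_mul (by positivity), ← ENNReal.ofReal_mul (by positivity),
    ← ENNReal.ofReal_add (by positivity) (by positivity),
    ENNReal.ofReal_le_ofReal_iff (by positivity)] at main
  have htv : ∫ x, φ x ^ 2 ∂ν = (∫ x, (φ x) ^ 2 ∂μ.toJordanDecomposition.posPart) +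
            ∫ x, (φ x) ^ 2 ∂μ.toJordanDecomposition.negPart := by
    rw [hν]; unfold SignedMeasure.totalVariation
    exact integral_add_measure (hi _) (hi _)
  have habs : |(∫ x, (φ x) ^ 2 ∂μ.toJordanDecomposition.posPart) -
            ∫ x, (φ x) ^ 2 ∂μ.toJordanDecomposition.negPart| ≤ ∫ x, φ x ^ 2 ∂ν := by
    have h1 := nn μ.toJordanDecomposition.posPart
    have h2 := nn μ.toJordanDecomposition.negPart
    rw [htv, abs_le]; constructor <;> linarith
  refine habs.trans ?_
  have hP : 0 < δ ^ (n:ℝ) * v := by positivity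
  have hpow : δ ^ 2 * δ ^ α = δ ^ ε * δ ^ (n:ℝ) := by
    rw [← Real.rpow_natCast, ← Real.rpow_add hδ, ← Real.rpow_add hδ]
    congr 1; rw [hε]; push_cast; ring
  refine le_of_mul_le_mul_left (main.trans ?_) hP
  have e1 : (δ ^ (n:ℝ) * v) * (2 * Cμ * δ ^ α / (δ ^ (n:ℝ) * v) * ∫ x, φ x ^ 2)
      = 2 * (Cμ * δ ^ α) * ∫ x, φ x ^ 2 := by
    field_simp
  have e2 : 2 * (k * δ ^ 2) * (k * (Cμ * δ ^ α)) =
      (δ ^ (n:ℝ) * v) * (2 * k^2 * Cμ / v * δ ^ ε) := by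
    calc _ = 2 * k^2 * Cμ * (δ ^ 2 * δ ^ α) := by ring
      _ = _ := by rw [hpow]; field_simp
  rw [mul_add, e1, e2, add_comm, mul_assoc (δ ^ (n:ℝ) * v)]
  gcongr
end
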